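/- Let k ≥ 2 and j ∈ {1,…,k−1}. There exists a positive constant d̄ such that with high probability, for all p ≥ p_j^− simultaneously, either N_{G_p} is empty or the minimum cardinality of the support of an element of N_{G_p} is less than d̄; here p_j^− := (1 − 1/√(log n))·(j+1)·(log n)·(k−j)!/((k−j+1)·n^{k−j}). -/

import Mathlib

open MeasureTheory Filter

attribute [local instance] Classical.propDecidable

namespace RSC

variable {V : Type*}

/-- `A` is an `i`-dimensional simplex of the complex `G`. -/
def IsSimplex (G : Set (Finset V)) (i : ℕ) (A : Finset V) : Prop :=
  A ∈ G ∧ A.card = i + 1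

/-- A `k`-dimensional simplicial complex on vertex set `V`. -/
structure IsKComplex (G : Set (Finset V)) (k : ℕ) : Prop where
  down : ∀ A ∈ G, ∀ B, B ⊆ A → B.Nonempty → B ∈ G
  singletons : ∀ v : V, ({v} : Finset V) ∈ G
  dim : ∀ A ∈ G, A.card ≤ k + 1

/-- `i`-cochains with `F₂`-coefficients. -/
abbrev Cochain (G : Set (Finset V)) (i : ℕ) : Type _ :=
  {A : Finset V // IsSimplex G i A} → ZMod 2

/-- The coboundary map `δ^i : C^i(G) → C^{i+1}(G)`. -/
noncomputable def coboundary (G : Set (Finset V)) (i : ℕ) :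
    Cochain G i →ₗ[ZMod 2] Cochain G (i + 1) where
  toFun f := fun σ => ∑ τ ∈ Finset.powersetCard (i + 1) (σ : Finset V),
      if h : IsSimplex G i τ then f ⟨τ, h⟩ else 0
  map_add' f g := by
    funext σ
    simp only [Pi.add_apply, ← Finset.sum_add_distrib]
    refine Finset.sum_congr rfl fun τ _ => ?_
    by_cases h : IsSimplex G i τ <;> simp [h]
  map_smul' c f := by
    funext σ
    simp only [Pi.smul_apply, RingHom.id_apply, Finset.smul_sum]
    refine Finset.sum_congr rfl fun τ _ => ?_
    by_cases h : IsSimplex G i τ <;> simp [h]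

/-- The submodule of `i`-cocycles. -/
noncomputable def cocycles (G : Set (Finset V)) (i : ℕ) : Submodule (ZMod 2) (Cochain G i) :=
  LinearMap.ker (coboundary G i)

/-- The submodule of `i`-coboundaries (`δ^{-1}` is the zero map). -/
noncomputable def coboundaries (G : Set (Finset V)) : (i : ℕ) → Submodule (ZMod 2) (Cochain G i)
  | 0 => ⊥
  | (i + 1) => LinearMap.range (coboundary G i)

/-- The `i`-th cohomology group `H^i(G;F₂) = ker δ^i / im δ^{i-1}`. -/
noncomputable abbrev cohomology (G : Set (Finset V)) (i : ℕ) :=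
  (cocycles G i) ⧸ ((coboundaries G i).comap (cocycles G i).subtype)

/-- `F₂`-cohomological `j`-connectedness: `H^0 ≅ F₂` and `H^i = 0` for `1 ≤ i ≤ j`. -/
def CohomConnected (G : Set (Finset V)) (j : ℕ) : Prop :=
  Nonempty (cohomology G 0 ≃ₗ[ZMod 2] ZMod 2) ∧
    ∀ i, 1 ≤ i → i ≤ j → Subsingleton (cohomology G i)

/-- The `j`-flower in `K` with centre `C`: the set of petals `C ∪ {w}`, `w ∈ K \ C`. -/
def Flower [DecidableEq V] (K C : Finset V) : Set (Finset V) :=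
  {P | ∃ w ∈ K \ C, P = insert w C}

/-- A copy of `M_j^-`: a `k`-simplex `K` together with a `(j-1)`-simplex `C ⊆ K` such that
each petal of the flower `F(K,C)` is contained in no `k`-simplex other than `K`. -/
def IsMjMinus [DecidableEq V] (G : Set (Finset V)) (k j : ℕ) (K C : Finset V) : Prop :=
  IsSimplex G k K ∧ C ∈ G ∧ C.card = j ∧ C ⊆ K ∧
    ∀ P ∈ Flower K C, ∀ K', IsSimplex G k K' → P ⊆ K' → K' = K

/-- A `j`-cycle: every `(j-1)`-simplex lies in an even number of members of `J`. -/
def IsCycle (G : Set (Finset V)) (j : ℕ) (J : Finset (Finset V)) : Prop :=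
  (∀ σ ∈ J, IsSimplex G j σ) ∧
    ∀ τ : Finset V, τ.card = j → Even (J.filter (fun σ => τ ⊆ σ)).card

/-- A copy of `M_j`. -/
def IsMj [DecidableEq V] (G : Set (Finset V)) (k j : ℕ) (K C : Finset V)
    (J : Finset (Finset V)) : Prop :=
  IsMjMinus G k j K C ∧ IsCycle G j J ∧ ∃! P : Finset V, P ∈ J ∧ P ∈ Flower K C

/-- A `j`-shell: a `(j+2)`-set all of whose `(j+1)`-subsets are `j`-simplices. -/
def IsShell (G : Set (Finset V)) (j : ℕ) (A : Finset V) : Prop :=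
  A.card = j + 2 ∧ ∀ τ ⊆ A, τ.card = j + 1 → τ ∈ G

/-- A copy of `M_j^*`. -/
def IsMjStar [DecidableEq V] (G : Set (Finset V)) (k j : ℕ) (K C : Finset V) (w a : V) : Prop :=
  IsMjMinus G k j K C ∧ w ∈ K \ C ∧ a ∉ K ∧ IsShell G j (insert a (insert w C))

/-- The support of a cochain. -/
def cochainSupport {G : Set (Finset V)} {i : ℕ} (f : Cochain G i) : Set (Finset V) :=
  {A | ∃ h : IsSimplex G i A, f ⟨A, h⟩ = 1}

/-- A cochain arising from a copy of `M_j^-`: its support is the flower `F(K,C)`. -/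
def ArisesFrom [DecidableEq V] (G : Set (Finset V)) (k j : ℕ) (f : Cochain G j)
    (K C : Finset V) : Prop :=
  IsMjMinus G k j K C ∧ cochainSupport f = Flower K C

/-- A `j`-cocycle generated by copies of `M_j^-`: it differs by a `j`-coboundary from a sum
of `j`-cocycles arising from copies of `M_j^-`. -/
def GeneratedByMjMinus [DecidableEq V] (G : Set (Finset V)) (k j : ℕ) (f : Cochain G j) : Prop :=
  ∃ (m : ℕ) (fs : Fin m → Cochain G j),
    (∀ i, ∃ K C, ArisesFrom G k j (fs i) K C) ∧
      f - (∑ i, fs i) ∈ coboundaries G j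

/-- Membership in `N_G`: a `j`-cocycle not generated by copies of `M_j^-`. -/
def InNG [DecidableEq V] (G : Set (Finset V)) (k j : ℕ) (f : Cochain G j) : Prop :=
  f ∈ cocycles G j ∧ ¬ GeneratedByMjMinus G k j f

/-- Traversability: the transitive closure of "lying in a common `k`-simplex" is `S × S`. -/
def Traversable (G : Set (Finset V)) (k : ℕ) (S : Set (Finset V)) : Prop :=
  ∀ σ₁ ∈ S, ∀ σ₂ ∈ S,
    Relation.TransGen
      (fun a b => a ∈ S ∧ b ∈ S ∧ ∃ K, IsSimplex G k K ∧ a ⊆ K ∧ b ⊆ K) σ₁ σ₂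

/-- A local obstacle: a `k`-simplex containing at least `k-j+1` many `j`-simplices,
each lying in no other `k`-simplex. -/
def IsLocalObstacle (G : Set (Finset V)) (k j : ℕ) (K : Finset V) : Prop :=
  IsSimplex G k K ∧
    k - j + 1 ≤ {σ : Finset V | IsSimplex G j σ ∧ σ ⊆ K ∧
      ∀ K', IsSimplex G k K' → σ ⊆ K' → K' = K}.ncard

/-- The random complex `G_p` given birth times `t`: all singletons together with all
non-empty subsets of `(k+1)`-sets with birth time at most `p`. -/
def complexAt (k n : ℕ) (t : Finset (Fin n) → ℝ) (p : ℝ) : Set (Finset (Fin n)) :=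
  {A | (∃ v, A = {v}) ∨
    (A.Nonempty ∧ ∃ K : Finset (Fin n), K.card = k + 1 ∧ t K ≤ p ∧ A ⊆ K)}

/-- The distribution of birth times: i.i.d. uniform on `[0,1]`. -/
noncomputable def birthMeasure (n : ℕ) : Measure (Finset (Fin n) → ℝ) :=
  Measure.pi fun _ => volume.restrict (Set.Icc (0 : ℝ) 1)

/-- `p_{M_j}`: the supremum of the probabilities `p ∈ [0,1]` at which `G_p` contains
a copy of `M_j`. -/
noncomputable def pMj (k j n : ℕ) (t : Finset (Fin n) → ℝ) : ℝ :=
  sSup {p : ℝ | p ∈ Set.Icc (0 : ℝ) 1 ∧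
    ∃ K C J, IsMj (complexAt k n t p) k j K C J}

/-- The threshold `p_j`. -/
noncomputable def pjThreshold (k j n : ℕ) : ℝ :=
  ((j + 1 : ℝ) * Real.log n + Real.log (Real.log n)) * (Nat.factorial (k - j)) /
    (((k - j + 1 : ℕ) : ℝ) * (n : ℝ) ^ (k - j))

/-- `p_j^-`. -/
noncomputable def pjMinus (k j n : ℕ) : ℝ :=
  (1 - 1 / Real.sqrt (Real.log n)) * ((j + 1 : ℝ) * Real.log n) * (Nat.factorial (k - j)) /
    (((k - j + 1 : ℕ) : ℝ) * (n : ℝ) ^ (k - j))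

/-- `p_{j-1}^-`. -/
noncomputable def pjPrevMinus (k j n : ℕ) : ℝ :=
  (1 - 1 / Real.sqrt (Real.log n)) * ((j : ℝ) * Real.log n) * (Nat.factorial (k - j + 1)) /
    (((k - j + 2 : ℕ) : ℝ) * (n : ℝ) ^ (k - j + 1))

/-- `p_j^{(1)}`. -/
noncomputable def pjOne (k j n : ℕ) : ℝ :=
  1 / (10 * ((j : ℝ) + 1) * (Nat.choose (k + 1) (j + 1)) * (n : ℝ) ^ (k - j))

/-- The number of copies of `M_j^-` in `G`. -/
noncomputable def countMjMinus (k j : ℕ) {n : ℕ} (G : Set (Finset (Fin n))) : ℕ :=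
  {x : Finset (Fin n) × Finset (Fin n) | IsMjMinus G k j x.1 x.2}.ncard

/-- The number of copies of `M_j^*` in `G`. -/
noncomputable def countMjStar (k j : ℕ) {n : ℕ} (G : Set (Finset (Fin n))) : ℕ :=
  {x : Finset (Fin n) × Finset (Fin n) × Fin n × Fin n |
    IsMjStar G k j x.1 x.2.1 x.2.2.1 x.2.2.2}.ncard

section Deterministic

set_option linter.unusedSectionVars false

/-- The members of `F` contained in `A`. -/
noncomputable def inside (F : Finset (Finset V)) (A : Finset V) : Finset (Finset V) :=
  F.filter (fun σ => σ ⊆ A)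

lemma mem_inside {F : Finset (Finset V)} {A σ : Finset V} :
    σ ∈ inside F A ↔ σ ∈ F ∧ σ ⊆ A := by
  simp [inside]

lemma zmod2_cases (x : ZMod 2) : x = 0 ∨ x = 1 := by
  revert x; decide

lemma card_supersets (U τ : Finset V) (m : ℕ) (hτ : τ ⊆ U) (hm : τ.card ≤ m) :
    ((Finset.powersetCard m U).filter (fun σ => τ ⊆ σ)).card
      = (U.card - τ.card).choose (m - τ.card) := by
  rw [← Finset.card_sdiff_of_subset hτ, ← Finset.card_powersetCard]
  refine Finset.card_bij' (fun σ _ => σ \ τ) (fun ρ _ => ρ ∪ τ) ?_ ?_ ?_ ?_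
  · intro σ hσ
    simp only [Finset.mem_filter, Finset.mem_powersetCard] at hσ ⊢
    exact ⟨Finset.sdiff_subset_sdiff hσ.1.1 le_rfl, by
      rw [Finset.card_sdiff_of_subset hσ.2, hσ.1.2]⟩
  · intro ρ hρ
    simp only [Finset.mem_filter, Finset.mem_powersetCard] at hρ ⊢
    have hd : Disjoint ρ τ := Finset.disjoint_of_subset_left hρ.1 Finset.sdiff_disjoint
    refine ⟨⟨Finset.union_subset (hρ.1.trans Finset.sdiff_subset) hτ, ?_⟩,
      Finset.subset_union_right⟩
    rw [Finset.card_union_of_disjoint hd, hρ.2]; omega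
  · intro σ hσ
    simp only [Finset.mem_filter] at hσ
    exact Finset.sdiff_union_of_subset hσ.2
  · intro ρ hρ
    simp only [Finset.mem_powersetCard] at hρ
    have hd : Disjoint ρ τ := Finset.disjoint_of_subset_left hρ.1 Finset.sdiff_disjoint
    rw [Finset.union_sdiff_right, Finset.sdiff_eq_self_of_disjoint hd]

lemma sum_sum_zero (h : Finset V → ZMod 2) (A : Finset V) (i : ℕ) (hA : A.card = i + 3) :
    ∑ σ ∈ Finset.powersetCard (i + 2) A, ∑ τ ∈ Finset.powersetCard (i + 1) σ, h τ = 0 := by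
  rw [Finset.sum_comm' (t' := Finset.powersetCard (i + 1) A)
    (s' := fun τ => (Finset.powersetCard (i + 2) A).filter (fun σ => τ ⊆ σ))]
  · refine Finset.sum_eq_zero fun τ hτ => ?_
    rw [Finset.mem_powersetCard] at hτ
    rw [Finset.sum_const, card_supersets A τ (i + 2) hτ.1 (by omega), hA, hτ.2]
    rw [show i + 3 - (i + 1) = 2 by omega, show i + 2 - (i + 1) = 1 by omega]
    rcases zmod2_cases (h τ) with h | h <;> rw [h] <;> decide
  · intro σ τ
    simp only [Finset.mem_filter, Finset.mem_powersetCard]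
    constructor
    · rintro ⟨⟨h1, h2⟩, h3, h4⟩
      exact ⟨⟨⟨h1, h2⟩, h3⟩, h3.trans h1, h4⟩
    · rintro ⟨⟨⟨h1, h2⟩, h3⟩, _, h4⟩
      exact ⟨⟨h1, h2⟩, h3, h4⟩

variable [Fintype V]

/-- Extension of a cochain by zero to all finsets. -/
noncomputable def ext0 {G : Set (Finset V)} {i : ℕ} (f : Cochain G i) (A : Finset V) : ZMod 2 :=
  if h : IsSimplex G i A then f ⟨A, h⟩ else 0

/-- The support as a finset. -/
noncomputable def suppF {G : Set (Finset V)} {i : ℕ} (f : Cochain G i) : Finset (Finset V) :=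
  Finset.univ.filter (fun A => ext0 f A = 1)

lemma mem_suppF {G : Set (Finset V)} {i : ℕ} {f : Cochain G i} {A : Finset V} :
    A ∈ suppF f ↔ ext0 f A = 1 := by
  simp [suppF]

lemma coe_suppF {G : Set (Finset V)} {i : ℕ} (f : Cochain G i) :
    ((suppF f : Finset (Finset V)) : Set (Finset V)) = cochainSupport f := by
  ext A
  rw [Finset.mem_coe]
  change A ∈ suppF f ↔ ∃ h : IsSimplex G i A, f ⟨A, h⟩ = 1
  rw [mem_suppF, ext0]
  by_cases h : IsSimplex G i A <;> simp [h]

lemma ncard_supp {G : Set (Finset V)} {i : ℕ} (f : Cochain G i) :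
    (cochainSupport f).ncard = (suppF f).card := by
  rw [← coe_suppF, Set.ncard_coe_finset]

lemma simplex_of_mem_suppF {G : Set (Finset V)} {i : ℕ} {f : Cochain G i} {A : Finset V}
    (h : A ∈ suppF f) : IsSimplex G i A := by
  rw [mem_suppF, ext0] at h
  by_contra hn
  simp [hn] at h

lemma sum_ext0 {G : Set (Finset V)} {i : ℕ} (f : Cochain G i) (A : Finset V) :
    ∑ τ ∈ Finset.powersetCard (i + 1) A, ext0 f τ
      = ((inside (suppF f) A).card : ZMod 2) := by
  have h1 : inside (suppF f) A
      = (Finset.powersetCard (i + 1) A).filter (fun τ => ext0 f τ = 1) := by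
    ext σ
    simp only [mem_inside, Finset.mem_filter, Finset.mem_powersetCard]
    constructor
    · rintro ⟨h, hA⟩
      exact ⟨⟨hA, (simplex_of_mem_suppF h).2⟩, mem_suppF.1 h⟩
    · rintro ⟨⟨hA, _⟩, h⟩
      exact ⟨mem_suppF.2 h, hA⟩
  rw [h1, Finset.card_filter]
  push_cast
  refine Finset.sum_congr rfl fun τ _ => ?_
  rcases zmod2_cases (ext0 f τ) with h | h <;> simp [h]

lemma coboundary_apply {G : Set (Finset V)} {i : ℕ} (f : Cochain G i)
    (σ : {A : Finset V // IsSimplex G (i + 1) A}) :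
    coboundary G i f σ = ∑ τ ∈ Finset.powersetCard (i + 1) (σ : Finset V), ext0 f τ := rfl

lemma cocycle_iff {G : Set (Finset V)} {i : ℕ} (f : Cochain G i) :
    f ∈ cocycles G i ↔ ∀ A, IsSimplex G (i + 1) A →
      Even (inside (suppF f) A).card := by
  rw [cocycles, LinearMap.mem_ker]
  constructor
  · intro h A hA
    have := congrFun h ⟨A, hA⟩
    rw [coboundary_apply, sum_ext0] at this
    exact (ZMod.natCast_eq_zero_iff_even).1 this
  · intro h
    funext A
    rw [coboundary_apply, sum_ext0]
    exact (ZMod.natCast_eq_zero_iff_even).2 (h A A.2)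

lemma gen_add [DecidableEq V] {G : Set (Finset V)} {k j : ℕ} {f g : Cochain G j}
    (hf : GeneratedByMjMinus G k j f) (hg : GeneratedByMjMinus G k j g) :
    GeneratedByMjMinus G k j (f + g) := by
  obtain ⟨m, fs, h1, h2⟩ := hf
  obtain ⟨m', gs, h1', h2'⟩ := hg
  refine ⟨m + m', Fin.append fs gs, ?_, ?_⟩
  · intro i
    refine Fin.addCases (fun i => ?_) (fun i => ?_) i
    · rw [Fin.append_left]; exact h1 i
    · rw [Fin.append_right]; exact h1' i
  · rw [Fin.sum_univ_add]
    simp only [Fin.append_left, Fin.append_right]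
    have := Submodule.add_mem _ h2 h2'
    rwa [show f + g - (∑ i, fs i + ∑ i, gs i) = f - ∑ i, fs i + (g - ∑ i, gs i) by abel]

lemma gen_of_add_cob [DecidableEq V] {G : Set (Finset V)} {k j : ℕ} {f b : Cochain G j}
    (hb : b ∈ coboundaries G j) (hf : GeneratedByMjMinus G k j (f + b)) :
    GeneratedByMjMinus G k j f := by
  obtain ⟨m, fs, h1, h2⟩ := hf
  refine ⟨m, fs, h1, ?_⟩
  have := Submodule.sub_mem _ h2 hb
  rwa [show f + b - (∑ i, fs i) - b = f - ∑ i, fs i by abel] at this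

/-- Connectivity of the support of a minimal element of `N_G`. -/
lemma min_connected [DecidableEq V] {G : Set (Finset V)} {k j : ℕ} (𝒢 : Set (Finset V))
    (hcov : ∀ A ∈ G, 2 ≤ A.card → ∃ K ∈ 𝒢, A ⊆ K)
    (f : Cochain G j) (hf : InNG G k j f)
    (hmin : ∀ g : Cochain G j, InNG G k j g → (suppF f).card ≤ (suppF g).card)
    (F : Finset (Finset V)) (hFS : F ⊆ suppF f) (hne : F.Nonempty)
    (hcl : ∀ K ∈ 𝒢, ∀ σ ∈ F, σ ⊆ K → ∀ τ ∈ suppF f, τ ⊆ K → τ ∈ F) : F = suppF f := by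
  by_contra hneq
  let f1 : Cochain G j := fun A => if (A : Finset V) ∈ F then f A else 0
  let f2 : Cochain G j := fun A => if (A : Finset V) ∈ F then 0 else f A
  have hsum : f = f1 + f2 := by
    funext A
    by_cases h : (A : Finset V) ∈ F <;> simp [f1, f2, h]
  have hs1 : suppF f1 = F := by
    ext A
    constructor
    · intro h
      have hs := simplex_of_mem_suppF h
      rw [mem_suppF, ext0, dif_pos hs] at h
      by_contra hn
      simp [f1, hn] at h
    · intro h
      have h' := hFS h
      have hs := simplex_of_mem_suppF h'
      rw [mem_suppF, ext0, dif_pos hs] at h' ⊢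
      simp [f1, h, h']
  have hs2 : suppF f2 = suppF f \ F := by
    ext A
    rw [Finset.mem_sdiff]
    constructor
    · intro h
      have hs := simplex_of_mem_suppF h
      rw [mem_suppF, ext0, dif_pos hs] at h
      by_cases hn : A ∈ F
      · simp [f2, hn] at h
      · refine ⟨?_, hn⟩
        rw [mem_suppF, ext0, dif_pos hs]
        simpa [f2, hn] using h
    · rintro ⟨h', h⟩
      have hs := simplex_of_mem_suppF h'
      rw [mem_suppF, ext0, dif_pos hs] at h' ⊢
      simp [f2, h, h']
  have hc1 : f1 ∈ cocycles G j := by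
    rw [cocycle_iff]
    intro A hA
    obtain ⟨K, hK, hAK⟩ := hcov A hA.1 (by rw [hA.2]; omega)
    rw [hs1]
    by_cases hex : ∃ σ ∈ F, σ ⊆ K
    · obtain ⟨σ, hσ, hσK⟩ := hex
      have : inside F A = inside (suppF f) A := by
        ext τ
        simp only [mem_inside]
        exact ⟨fun h => ⟨hFS h.1, h.2⟩,
          fun h => ⟨hcl K hK σ hσ hσK τ h.1 (h.2.trans hAK), h.2⟩⟩
      rw [this]
      exact (cocycle_iff f).1 hf.1 A hA
    · push Not at hex
      have : inside F A = ∅ := by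
        rw [Finset.eq_empty_iff_forall_notMem]
        intro τ hτ
        rw [mem_inside] at hτ
        exact hex τ hτ.1 (hτ.2.trans hAK)
      rw [this]; simp
  have hc2 : f2 ∈ cocycles G j := by
    have : f2 = f - f1 := by rw [hsum]; abel
    rw [this]
    exact Submodule.sub_mem _ hf.1 hc1
  have hlt1 : F.card < (suppF f).card := Finset.card_lt_card (lt_of_le_of_ne hFS hneq)
  have hlt2 : (suppF f \ F).card < (suppF f).card := by
    rw [Finset.card_sdiff_of_subset hFS]
    have := hne.card_pos
    omega
  have hg1 : GeneratedByMjMinus G k j f1 := by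
    by_contra hn
    have := hmin f1 ⟨hc1, hn⟩
    rw [hs1] at this; omega
  have hg2 : GeneratedByMjMinus G k j f2 := by
    by_contra hn
    have := hmin f2 ⟨hc2, hn⟩
    rw [hs2] at this; omega
  apply hf.2
  rw [hsum]
  exact gen_add hg1 hg2

lemma cob_mem_cocycles {G : Set (Finset V)}
    (hdown : ∀ A ∈ G, ∀ B, B ⊆ A → B.Nonempty → B ∈ G) {i : ℕ} (g : Cochain G i) :
    coboundary G i g ∈ cocycles G (i + 1) := by
  rw [cocycles, LinearMap.mem_ker]
  funext A
  rw [coboundary_apply]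
  rw [Pi.zero_apply, ← sum_sum_zero (ext0 g) A i A.2.2]
  refine Finset.sum_congr rfl fun σ hσ => ?_
  rw [Finset.mem_powersetCard] at hσ
  have hs : IsSimplex G (i + 1) σ :=
    ⟨hdown _ A.2.1 σ hσ.1 (Finset.card_pos.1 (by omega)), hσ.2⟩
  rw [ext0, dif_pos hs, coboundary_apply]

/-- The (j+2)-sets with odd number of elements of `F`. -/
noncomputable def oddSets (j : ℕ) (F : Finset (Finset V)) : Finset (Finset V) :=
  (Finset.powersetCard (j + 2) Finset.univ).filter
    (fun A => ¬ Even (inside F A).card)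

/-- Meshulam-Wallach type inequality for one vertex. -/
lemma mw_vertex [DecidableEq V] {G : Set (Finset V)} {k j : ℕ} (hj : 1 ≤ j)
    (hdown : ∀ A ∈ G, ∀ B, B ⊆ A → B.Nonempty → B ∈ G)
    (f : Cochain G j) (hf : InNG G k j f)
    (hmin : ∀ g : Cochain G j, InNG G k j g → (suppF f).card ≤ (suppF g).card) (v : V) :
    (suppF f).card ≤ ((oddSets j (suppF f)).filter (fun A => v ∈ A)).card := by
  obtain ⟨i, rfl⟩ : ∃ i, j = i + 1 := ⟨j - 1, by omega⟩
  let gt : Finset V → ZMod 2 := fun τ => if v ∈ τ then 0 else ext0 f (insert v τ)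
  let g : Cochain G i := fun τ => gt τ
  have hb : coboundary G i g ∈ coboundaries G (i + 1) := ⟨g, rfl⟩
  have hN : InNG G k (i + 1) (f + coboundary G i g) :=
    ⟨Submodule.add_mem _ hf.1 (cob_mem_cocycles hdown g), fun h => hf.2 (gen_of_add_cob hb h)⟩
  refine (hmin _ hN).trans ?_
  have key : ∀ σ ∈ suppF (f + coboundary G i g), v ∉ σ ∧ insert v σ ∈ oddSets (i + 1) (suppF f) := by
    intro σ hσ
    have hs := simplex_of_mem_suppF hσ
    rw [mem_suppF, ext0, dif_pos hs] at hσ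
    have hval : coboundary G i g ⟨σ, hs⟩ = ∑ τ ∈ Finset.powersetCard (i + 1) σ, gt τ := by
      rw [coboundary_apply]
      refine Finset.sum_congr rfl fun τ hτ => ?_
      rw [Finset.mem_powersetCard] at hτ
      have hs : IsSimplex G i τ :=
        ⟨hdown _ hs.1 τ hτ.1 (Finset.card_pos.1 (by omega)), hτ.2⟩
      rw [ext0, dif_pos hs]
    rw [Pi.add_apply, hval] at hσ
    have hfσ : f ⟨σ, hs⟩ = ext0 f σ := by rw [ext0, dif_pos hs]
    rw [hfσ] at hσ
    have hv : v ∉ σ := by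
      intro hv
      have h1 : ∑ τ ∈ Finset.powersetCard (i + 1) σ, gt τ = gt (σ.erase v) := by
        apply Finset.sum_eq_single_of_mem
        · rw [Finset.mem_powersetCard]
          exact ⟨Finset.erase_subset _ _, by rw [Finset.card_erase_of_mem hv, hs.2]; rfl⟩
        · intro τ hτ hne
          rw [Finset.mem_powersetCard] at hτ
          by_cases hvτ : v ∈ τ
          · simp [gt, hvτ]
          · exfalso
            apply hne
            apply Finset.eq_of_subset_of_card_le
            · exact Finset.subset_erase.2 ⟨hτ.1, hvτ⟩
            · rw [Finset.card_erase_of_mem hv, hs.2, hτ.2]; simp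
      rw [h1] at hσ
      have h2 : gt (σ.erase v) = ext0 f σ := by
        simp [gt, Finset.insert_erase hv]
      rw [h2] at hσ
      rcases zmod2_cases (ext0 f σ) with h | h <;> rw [h] at hσ <;> revert hσ <;> decide
    refine ⟨hv, ?_⟩
    rw [oddSets, Finset.mem_filter, Finset.mem_powersetCard]
    refine ⟨⟨Finset.subset_univ _, by rw [Finset.card_insert_of_notMem hv, hs.2]⟩, ?_⟩
    rw [← ZMod.natCast_eq_zero_iff_even, ← sum_ext0, Finset.powersetCard_succ_insert hv,
      Finset.sum_union, Finset.sum_image]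
    · have h1 : Finset.powersetCard (i + 1 + 1) σ = {σ} := by
        conv_lhs => rw [← hs.2]
        exact Finset.powersetCard_self σ
      rw [h1, Finset.sum_singleton]
      have h2 : ∑ τ ∈ Finset.powersetCard (i + 1) σ, ext0 f (insert v τ)
          = ∑ τ ∈ Finset.powersetCard (i + 1) σ, gt τ := by
        refine Finset.sum_congr rfl fun τ hτ => ?_
        rw [Finset.mem_powersetCard] at hτ
        have : v ∉ τ := fun h => hv (hτ.1 h)
        simp [gt, this]
      rw [h2, hσ]
      decide
    · intro τ hτ τ' hτ' h
      have hτ := (Finset.mem_powersetCard.1 hτ).1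
      have hτ' := (Finset.mem_powersetCard.1 hτ').1
      have h1 : v ∉ τ := fun h => hv (hτ h)
      have h2 : v ∉ τ' := fun h => hv (hτ' h)
      rw [← Finset.erase_insert h1, ← Finset.erase_insert h2, h]
    · rw [Finset.disjoint_left]
      intro τ hτ hτ'
      rw [Finset.mem_image] at hτ'
      obtain ⟨ρ, _, rfl⟩ := hτ'
      exact hv ((Finset.mem_powersetCard.1 hτ).1 (Finset.mem_insert_self _ _))
  refine Finset.card_le_card_of_injOn (fun σ => insert v σ) ?_ ?_
  · intro σ hσ
    have := key σ hσ
    rw [Finset.mem_coe, Finset.mem_filter]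
    exact ⟨this.2, Finset.mem_insert_self _ _⟩
  · intro σ hσ σ' hσ' h
    have h1 := (key σ hσ).1
    have h2 := (key σ' hσ').1
    rw [← Finset.erase_insert h1, ← Finset.erase_insert h2]
    simp only at h
    rw [h]

lemma mw_ineq [DecidableEq V] {G : Set (Finset V)} {k j : ℕ} (hj : 1 ≤ j)
    (hdown : ∀ A ∈ G, ∀ B, B ⊆ A → B.Nonempty → B ∈ G)
    (f : Cochain G j) (hf : InNG G k j f)
    (hmin : ∀ g : Cochain G j, InNG G k j g → (suppF f).card ≤ (suppF g).card) :
    Fintype.card V * (suppF f).card ≤ (j + 2) * (oddSets j (suppF f)).card := by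
  have h1 : ∑ _v : V, (suppF f).card
      ≤ ∑ v : V, ((oddSets j (suppF f)).filter (fun A => v ∈ A)).card :=
    Finset.sum_le_sum fun v _ => mw_vertex hj hdown f hf hmin v
  rw [Finset.sum_const, smul_eq_mul, Finset.card_univ] at h1
  refine h1.trans (le_of_eq ?_)
  simp only [Finset.card_filter]
  rw [Finset.sum_comm]
  have : ∀ A ∈ oddSets j (suppF f), (∑ v : V, if v ∈ A then 1 else 0) = j + 2 := by
    intro A hA
    rw [oddSets, Finset.mem_filter, Finset.mem_powersetCard] at hA
    rw [← Finset.card_filter]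
    simp [hA.1.2]
  rw [Finset.sum_congr rfl this, Finset.sum_const, smul_eq_mul, mul_comm]

/-- The (k+1)-sets which must not be simplices. -/
noncomputable def badSets (k j : ℕ) (F : Finset (Finset V)) : Finset (Finset V) :=
  (Finset.powersetCard (k + 1) Finset.univ).filter (fun K => ∃ A ∈ oddSets j F, A ⊆ K)

lemma mem_oddSets {j : ℕ} {F : Finset (Finset V)} {A : Finset V} :
    A ∈ oddSets j F ↔ A.card = j + 2 ∧ ¬ Even (inside F A).card := by
  rw [oddSets, Finset.mem_filter, Finset.mem_powersetCard]
  simp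

lemma mem_badSets {k j : ℕ} {F : Finset (Finset V)} {K : Finset V} :
    K ∈ badSets k j F ↔ K.card = k + 1 ∧ ∃ A ∈ oddSets j F, A ⊆ K := by
  rw [badSets, Finset.mem_filter, Finset.mem_powersetCard]
  simp

lemma badSets_card (k j : ℕ) (hjk : j < k) (F : Finset (Finset V)) :
    (oddSets j F).card * (Fintype.card V - (j + 2)).choose (k - j - 1)
      ≤ (badSets k j F).card * (k + 1).choose (j + 2) := by
  refine Finset.card_mul_le_card_mul (fun A K => A ⊆ K) ?_ ?_
  · intro A hA
    have hA' := hA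
    rw [oddSets, Finset.mem_filter, Finset.mem_powersetCard] at hA'
    have := card_supersets Finset.univ A (k + 1) (Finset.subset_univ _) (by omega)
    rw [hA'.1.2, Finset.card_univ, show k + 1 - (j + 2) = k - j - 1 by omega] at this
    rw [← this]
    apply Finset.card_le_card
    intro K hK
    rw [Finset.mem_filter] at hK
    rw [Finset.mem_bipartiteAbove, badSets, Finset.mem_filter]
    exact ⟨⟨hK.1, A, hA, hK.2⟩, hK.2⟩
  · intro K hK
    rw [badSets, Finset.mem_filter, Finset.mem_powersetCard] at hK
    rw [← hK.1.2, ← Finset.card_powersetCard]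
    apply Finset.card_le_card
    intro A hA
    rw [Finset.mem_bipartiteBelow, oddSets, Finset.mem_filter, Finset.mem_powersetCard] at hA
    rw [Finset.mem_powersetCard]
    exact ⟨hA.2, hA.1.1.2⟩

end Deterministic
section Explore

variable [Fintype V] {Ω : Type*}

/-- Exploration states: processed sets, found sets, used `k`-simplices. -/
abbrev ExpState (V : Type*) : Type _ :=
  Finset (Finset V) × Finset (Finset V) × Finset (Finset V)

/-- Exploration events. -/
noncomputable def Ev (k j : ℕ) (B : ExpState V → Set Ω) : ℕ → ExpState V → Set Ω
  | 0, x => B x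
  | (l + 1), x =>
    if h : (x.2.1 \ x.1).Nonempty then
      Ev k j B l (insert h.choose x.1, x.2.1, x.2.2) ∪
        ⋃ R ∈ (Finset.powersetCard (k - j) (Finset.univ : Finset V)).filter
            (fun R => (h.choose ∪ R).card = k + 1 ∧ h.choose ∪ R ∉ x.2.2),
          ⋃ A ∈ (Finset.powersetCard (j + 1) (h.choose ∪ R)).powerset,
            Ev k j B l (x.1, x.2.1 ∪ A, insert (h.choose ∪ R) x.2.2)
    else Ev k j B l x

lemma measure_Ev_le [MeasurableSpace Ω] (μ : Measure Ω) (k j : ℕ) (B : ExpState V → Set Ω)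
    (q e N : ENNReal) (hN : ((Fintype.card V).choose (k - j) : ENNReal) ≤ N)
    (hB : ∀ x, μ (B x) ≤ q ^ x.2.2.card * e) (l : ℕ) (x : ExpState V) :
    μ (Ev k j B l x)
      ≤ q ^ x.2.2.card * (1 + N * 2 ^ ((k + 1).choose (j + 1)) * q) ^ l * e := by
  induction l generalizing x with
  | zero => simpa [Ev] using hB x
  | succ l ih =>
    set b : ENNReal := 2 ^ ((k + 1).choose (j + 1)) with hb
    set c : ENNReal := 1 + N * b * q with hc
    rw [Ev]
    split_ifs with h
    · set σ := h.choose
      refine (measure_union_le _ _).trans ?_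
      have h1 : μ (Ev k j B l (insert σ x.1, x.2.1, x.2.2)) ≤ q ^ x.2.2.card * c ^ l * e := ih _
      have h2 : μ (⋃ R ∈ (Finset.powersetCard (k - j) (Finset.univ : Finset V)).filter
            (fun R => (σ ∪ R).card = k + 1 ∧ σ ∪ R ∉ x.2.2),
          ⋃ A ∈ (Finset.powersetCard (j + 1) (σ ∪ R)).powerset,
            Ev k j B l (x.1, x.2.1 ∪ A, insert (σ ∪ R) x.2.2))
          ≤ N * (b * (q ^ (x.2.2.card + 1) * c ^ l * e)) := by
        refine (measure_biUnion_finset_le _ _).trans ?_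
        have h3 : ∀ R ∈ (Finset.powersetCard (k - j) (Finset.univ : Finset V)).filter
            (fun R => (σ ∪ R).card = k + 1 ∧ σ ∪ R ∉ x.2.2),
            μ (⋃ A ∈ (Finset.powersetCard (j + 1) (σ ∪ R)).powerset,
              Ev k j B l (x.1, x.2.1 ∪ A, insert (σ ∪ R) x.2.2))
            ≤ b * (q ^ (x.2.2.card + 1) * c ^ l * e) := by
          intro R hR
          rw [Finset.mem_filter] at hR
          refine (measure_biUnion_finset_le _ _).trans ?_
          refine (Finset.sum_le_card_nsmul _ _ (q ^ (x.2.2.card + 1) * c ^ l * e) ?_).trans ?_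
          · intro A _
            have := ih (x.1, x.2.1 ∪ A, insert (σ ∪ R) x.2.2)
            simp only at this
            rwa [Finset.card_insert_of_notMem hR.2.2] at this
          · rw [Finset.card_powerset, Finset.card_powersetCard, hR.2.1, nsmul_eq_mul, hb]
            push_cast
            exact le_rfl
        refine (Finset.sum_le_card_nsmul _ _ _ h3).trans ?_
        rw [nsmul_eq_mul]
        refine mul_le_mul_left ?_ _
        refine le_trans ?_ hN
        norm_cast
        refine (Finset.card_filter_le _ _).trans ?_
        rw [Finset.card_powersetCard, Finset.card_univ]
      refine (add_le_add h1 h2).trans (le_of_eq ?_)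
      rw [pow_succ c l, pow_succ q]
      conv_rhs => rw [hc, ← hc]
      rw [show q ^ x.2.2.card * (c ^ l * c) * e = (q ^ x.2.2.card * c ^ l * e) * c by ring]
      conv_rhs => rw [hc]
      ring
    · refine (ih x).trans ?_
      have : c ^ l ≤ c ^ (l + 1) := pow_le_pow_right₀ (by rw [hc]; exact le_self_add) (by omega)
      gcongr

lemma mem_Ev (k j : ℕ) (hjk : j < k) (B : ExpState V → Set Ω) (t : Ω)
    (S : Finset (Finset V)) (𝒢 : Set (Finset V))
    (hS : ∀ σ ∈ S, σ.card = j + 1) (h𝒢 : ∀ K ∈ 𝒢, K.card = k + 1)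
    (hconn : ∀ F ⊆ S, F.Nonempty →
      (∀ K ∈ 𝒢, ∀ σ ∈ F, σ ⊆ K → ∀ τ ∈ S, τ ⊆ K → τ ∈ F) → F = S)
    (hB : ∀ (D 𝒦 : Finset (Finset V)), (∀ K ∈ 𝒦, K ∈ 𝒢) → t ∈ B (D, S, 𝒦)) (l : ℕ) :
    ∀ D F 𝒦 : Finset (Finset V), D ⊆ F → F ⊆ S → F.Nonempty → (∀ K ∈ 𝒦, K ∈ 𝒢) →
      (∀ K ∈ 𝒦, ∀ τ ∈ S, τ ⊆ K → τ ∈ F) →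
      (∀ σ ∈ D, ∀ K ∈ 𝒢, σ ⊆ K → ∀ τ ∈ S, τ ⊆ K → τ ∈ F) →
      2 * S.card ≤ l + D.card + F.card → t ∈ Ev k j B l (D, F, 𝒦) := by
  induction l with
  | zero =>
    intro D F 𝒦 hDF hFS hne hK hKF hD hc
    have h1 := Finset.card_le_card hDF
    have h2 := Finset.card_le_card hFS
    have : F = S := Finset.eq_of_subset_of_card_le hFS (by omega)
    subst this
    exact hB D 𝒦 hK
  | succ l ih =>
    intro D F 𝒦 hDF hFS hne hK hKF hD hc
    rw [Ev]
    split_ifs with h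
    · have hσ := h.choose_spec
      set σ := h.choose
      simp only [Finset.mem_sdiff] at hσ
      by_cases hex : ∃ K ∈ 𝒢, σ ⊆ K ∧ ∃ τ ∈ S, τ ⊆ K ∧ τ ∉ F
      · obtain ⟨K, hK𝒢, hσK, τ, hτS, hτK, hτF⟩ := hex
        right
        have hKσ : σ ∪ (K \ σ) = K := Finset.union_sdiff_of_subset hσK
        have hR : K \ σ ∈ (Finset.powersetCard (k - j) (Finset.univ : Finset V)).filter
            (fun R => (σ ∪ R).card = k + 1 ∧ σ ∪ R ∉ 𝒦) := by
          rw [Finset.mem_filter, Finset.mem_powersetCard, hKσ]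
          refine ⟨⟨Finset.subset_univ _, ?_⟩, h𝒢 K hK𝒢, fun hKK => hτF (hKF K hKK τ hτS hτK)⟩
          rw [Finset.card_sdiff_of_subset hσK, h𝒢 K hK𝒢, hS σ (hFS hσ.1)]
          omega
        refine Set.mem_biUnion hR ?_
        rw [hKσ]
        have hA : S.filter (fun τ => τ ⊆ K) ∈ (Finset.powersetCard (j + 1) K).powerset := by
          rw [Finset.mem_powerset]
          intro τ hτ
          rw [Finset.mem_filter] at hτ
          rw [Finset.mem_powersetCard]
          exact ⟨hτ.2, hS τ hτ.1⟩
        refine Set.mem_biUnion hA ?_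
        apply ih
        · exact hDF.trans Finset.subset_union_left
        · exact Finset.union_subset hFS (Finset.filter_subset _ _)
        · exact hne.mono Finset.subset_union_left
        · intro K' hK'
          rcases Finset.mem_insert.1 hK' with rfl | hK'
          · exact hK𝒢
          · exact hK K' hK'
        · intro K' hK' ρ hρ hρK
          rw [Finset.mem_union, Finset.mem_filter]
          rcases Finset.mem_insert.1 hK' with rfl | hK'
          · exact Or.inr ⟨hρ, hρK⟩
          · exact Or.inl (hKF K' hK' ρ hρ hρK)
        · intro σ' hσ' K' hK' hs ρ hρ hρK
          exact Finset.mem_union_left _ (hD σ' hσ' K' hK' hs ρ hρ hρK)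
        · have : F.card < (F ∪ S.filter (fun τ => τ ⊆ K)).card := by
            apply Finset.card_lt_card
            refine ⟨Finset.subset_union_left, fun hsub => hτF (hsub ?_)⟩
            exact Finset.mem_union_right _ (Finset.mem_filter.2 ⟨hτS, hτK⟩)
          simp only
          omega
      · push Not at hex
        left
        apply ih
        · exact Finset.insert_subset hσ.1 hDF
        · exact hFS
        · exact hne
        · exact hK
        · exact hKF
        · intro σ' hσ' K' hK' hs ρ hρ hρK
          rcases Finset.mem_insert.1 hσ' with rfl | hσ'
          · exact hex K' hK' hs ρ hρ hρK
          · exact hD σ' hσ' K' hK' hs ρ hρ hρK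
        · simp only
          rw [Finset.card_insert_of_notMem hσ.2]
          omega
    · have hFD : F = D := by
        rw [Finset.not_nonempty_iff_eq_empty, Finset.sdiff_eq_empty_iff_subset] at h
        exact Finset.Subset.antisymm h hDF
      have hFS' : F = S := by
        apply hconn F hFS hne
        intro K hK σ hσ
        exact hD σ (hFD ▸ hσ) K hK
      apply ih D F 𝒦 hDF hFS hne hK hKF hD
      rw [← hFD, hFS']
      omega

end Explore
section Assembly

/-- Terminal events of the exploration. -/
def Base (n k j : ℕ) (u w M : ℝ) (x : ExpState (Fin n)) : Set (Finset (Fin n) → ℝ) :=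
  {t | (M ≤ ((badSets k j x.2.1).card : ℝ) ∧ Disjoint x.2.2 (badSets k j x.2.1)) ∧
    (∀ K ∈ x.2.2, t K ≤ u) ∧ ∀ K ∈ badSets k j x.2.1, w < t K}

lemma coord_le (u : ℝ) :
    (volume.restrict (Set.Icc (0 : ℝ) 1)) (Set.Iic u) ≤ ENNReal.ofReal u := by
  rw [Measure.restrict_apply measurableSet_Iic]
  have : Set.Iic u ∩ Set.Icc (0 : ℝ) 1 ⊆ Set.Icc 0 u := fun x hx => ⟨hx.2.1, hx.1⟩
  refine (measure_mono this).trans ?_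
  rw [Real.volume_Icc, sub_zero]

lemma coord_gt (w : ℝ) :
    (volume.restrict (Set.Icc (0 : ℝ) 1)) (Set.Ioi w) ≤ ENNReal.ofReal (Real.exp (-w)) := by
  rw [Measure.restrict_apply measurableSet_Ioi]
  have : Set.Ioi w ∩ Set.Icc (0 : ℝ) 1 ⊆ Set.Ioc w 1 := fun x hx => ⟨hx.1, hx.2.2⟩
  refine (measure_mono this).trans ?_
  rw [Real.volume_Ioc]
  apply ENNReal.ofReal_le_ofReal
  have := Real.add_one_le_exp (-w)
  linarith

lemma coord_univ : (volume.restrict (Set.Icc (0 : ℝ) 1)) Set.univ = 1 := by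
  simp

lemma measure_Base_le (n k j : ℕ) (u w M : ℝ) (hw : 0 ≤ w) (x : ExpState (Fin n)) :
    birthMeasure n (Base n k j u w M x)
      ≤ ENNReal.ofReal u ^ x.2.2.card * ENNReal.ofReal (Real.exp (-(w * M))) := by
  by_cases hc : M ≤ ((badSets k j x.2.1).card : ℝ) ∧ Disjoint x.2.2 (badSets k j x.2.1)
  swap
  · have : Base n k j u w M x = ∅ := by
      rw [Set.eq_empty_iff_forall_notMem]
      intro t ht
      exact hc ht.1
    rw [this]; simp
  obtain ⟨hM, hd⟩ := hc
  set 𝒦 := x.2.2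
  set Q := badSets k j x.2.1 with hQ
  have hsub : Base n k j u w M x ⊆ Set.pi Set.univ
      (fun K => if K ∈ 𝒦 then Set.Iic u else if K ∈ Q then Set.Ioi w else Set.univ) := by
    intro t ht K _
    by_cases h1 : K ∈ 𝒦
    · simp only [if_pos h1]; exact ht.2.1 K h1
    · by_cases h2 : K ∈ Q
      · simp only [if_neg h1, if_pos h2]; exact ht.2.2 K h2
      · simp [h1, h2]
  refine (measure_mono hsub).trans ?_
  rw [birthMeasure, Measure.pi_pi]
  have hle : ∀ K ∈ (Finset.univ : Finset (Finset (Fin n))),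
      (volume.restrict (Set.Icc (0 : ℝ) 1))
        (if K ∈ 𝒦 then Set.Iic u else if K ∈ Q then Set.Ioi w else Set.univ)
      ≤ (if K ∈ 𝒦 then ENNReal.ofReal u else 1) *
        (if K ∈ Q then ENNReal.ofReal (Real.exp (-w)) else 1) := by
    intro K _
    by_cases h1 : K ∈ 𝒦
    · have h2 : K ∉ Q := Finset.disjoint_left.1 hd h1
      simp only [if_pos h1, if_neg h2, mul_one]
      exact coord_le u
    · by_cases h2 : K ∈ Q
      · simp only [if_neg h1, if_pos h2, one_mul]
        exact coord_gt w
      · simp only [if_neg h1, if_neg h2, one_mul]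
        exact coord_univ.le
  refine (Finset.prod_le_prod' hle).trans ?_
  rw [Finset.prod_mul_distrib]
  have e1 : ∏ K : Finset (Fin n), (if K ∈ 𝒦 then ENNReal.ofReal u else 1)
      = ENNReal.ofReal u ^ 𝒦.card := by
    rw [Finset.prod_ite_mem, Finset.univ_inter, Finset.prod_const]
  have e2 : ∏ K : Finset (Fin n), (if K ∈ Q then ENNReal.ofReal (Real.exp (-w)) else 1)
      = ENNReal.ofReal (Real.exp (-w)) ^ Q.card := by
    rw [Finset.prod_ite_mem, Finset.univ_inter, Finset.prod_const]
  rw [e1, e2]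
  refine mul_le_mul_right ?_ _
  rw [← ENNReal.ofReal_pow (Real.exp_pos _).le, ← Real.exp_nat_mul]
  apply ENNReal.ofReal_le_ofReal
  apply Real.exp_le_exp.2
  have := mul_le_mul_of_nonneg_left hM hw
  linarith

/-- The deterministic inclusion. -/
lemma bad_subset (k j n d : ℕ) (hj : 1 ≤ j) (hjk : j < k) (hd : 1 ≤ d) (c p0 : ℝ) (hp0 : 0 < p0)
    (hc : ∀ F : Finset (Finset (Fin n)), n * F.card ≤ (j + 2) * (oddSets j F).card →
      c * F.card * (n : ℝ) ^ (k - j) ≤ ((badSets k j F).card : ℝ))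
    (t : Finset (Fin n) → ℝ) (p : ℝ) (hp : p0 ≤ p)
    (hbad : ¬ ((∀ f : Cochain (complexAt k n t p) j, ¬ InNG (complexAt k n t p) k j f) ∨
            (∃ f : Cochain (complexAt k n t p) j, InNG (complexAt k n t p) k j f ∧
              ((cochainSupport f).ncard : ℝ) < (d : ℝ)))) :
    ∃ r s : ℕ, ∃ σ ∈ Finset.powersetCard (j + 1) (Finset.univ : Finset (Fin n)),
      t ∈ Ev k j (Base n k j ((r + 2) * p0) ((r + 1) * p0) (c * (s + d : ℕ) * (n : ℝ) ^ (k - j)))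
        (2 * (s + d)) (∅, {σ}, ∅) := by
  set G := complexAt k n t p with hG
  push Not at hbad
  obtain ⟨⟨f0, hf0⟩, hall⟩ := hbad
  -- minimal element
  obtain ⟨f, hf, hmin⟩ : ∃ f : Cochain G j, InNG G k j f ∧
      ∀ g : Cochain G j, InNG G k j g → (suppF f).card ≤ (suppF g).card := by
    have hne : {m : ℕ | ∃ f : Cochain G j, InNG G k j f ∧ (suppF f).card = m}.Nonempty :=
      ⟨_, f0, hf0, rfl⟩
    obtain ⟨f, hf, hfm⟩ := Nat.sInf_mem hne
    refine ⟨f, hf, fun g hg => ?_⟩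
    rw [hfm]
    exact Nat.sInf_le ⟨g, hg, rfl⟩
  have hdown : ∀ A ∈ G, ∀ B, B ⊆ A → B.Nonempty → B ∈ G := by
    intro A hA B hBA hB
    rcases hA with ⟨v, rfl⟩ | ⟨_, K, hK, htK, hAK⟩
    · left
      rcases Finset.subset_singleton_iff.1 hBA with h | h
      · exact absurd h hB.ne_empty
      · exact ⟨v, h⟩
    · right
      exact ⟨hB, K, hK, htK, hBA.trans hAK⟩
  let 𝒢 : Set (Finset (Fin n)) := {K | K.card = k + 1 ∧ t K ≤ p}
  have hcov : ∀ A ∈ G, 2 ≤ A.card → ∃ K ∈ 𝒢, A ⊆ K := by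
    intro A hA h2
    rcases hA with ⟨v, rfl⟩ | ⟨_, K, hK, htK, hAK⟩
    · simp at h2
    · exact ⟨K, ⟨hK, htK⟩, hAK⟩
  have hdS : d ≤ (suppF f).card := by
    have := hall f hf
    rw [ncard_supp] at this
    exact_mod_cast this
  have hmw := mw_ineq hj hdown f hf hmin
  rw [Fintype.card_fin] at hmw
  have hconn := fun F hFS hne => min_connected 𝒢 hcov f hf hmin F hFS hne
  set S := suppF f with hS
  have hScard : ∀ σ ∈ S, σ.card = j + 1 := fun σ hσ => (simplex_of_mem_suppF hσ).2
  obtain ⟨σ, hσ⟩ : S.Nonempty := Finset.card_pos.1 (by omega)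
  have hr1 : 1 ≤ ⌊p / p0⌋₊ := by
    rw [Nat.one_le_floor_iff, le_div_iff₀ hp0]; linarith
  refine ⟨⌊p / p0⌋₊ - 1, S.card - d, σ, ?_, ?_⟩
  · rw [Finset.mem_powersetCard]
    exact ⟨Finset.subset_univ _, hScard σ hσ⟩
  have hrr : ((⌊p / p0⌋₊ - 1 : ℕ) : ℝ) = (⌊p / p0⌋₊ : ℝ) - 1 := by
    rw [Nat.cast_sub hr1]; simp
  have hlow : (⌊p / p0⌋₊ : ℝ) * p0 ≤ p := by
    rw [← le_div_iff₀ hp0]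
    exact Nat.floor_le (div_nonneg (hp0.le.trans hp) hp0.le)
  have hup : p ≤ ((⌊p / p0⌋₊ : ℝ) + 1) * p0 := by
    rw [← div_le_iff₀ hp0]
    exact (Nat.lt_floor_add_one _).le
  have hnot : ∀ K ∈ badSets k j S, K ∉ 𝒢 := by
    intro K hK hK𝒢
    rw [mem_badSets] at hK
    obtain ⟨A, hA, hAK⟩ := hK.2
    rw [mem_oddSets] at hA
    apply hA.2
    apply (cocycle_iff f).1 hf.1 A
    refine ⟨Or.inr ⟨Finset.card_pos.1 (by omega), K, hK𝒢.1, hK𝒢.2, hAK⟩, hA.1⟩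
  rw [Nat.sub_add_cancel hdS]
  refine mem_Ev k j hjk _ t S 𝒢 hScard (fun K hK => hK.1) hconn ?_ _ ∅ {σ} ∅ ?_ ?_ ?_ ?_ ?_ ?_ ?_
  · intro D 𝒦 h𝒦
    refine ⟨⟨hc S hmw, ?_⟩, ?_, ?_⟩
    · rw [Finset.disjoint_left]
      intro K hK hK'
      exact hnot K hK' (h𝒦 K hK)
    · intro K hK
      have := (h𝒦 K hK).2
      rw [hrr]; linarith
    · intro K hK
      have h1 := hnot K hK
      rw [mem_badSets] at hK
      have h2 : p < t K := by
        by_contra hle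
        exact h1 ⟨hK.1, not_lt.1 hle⟩
      rw [hrr]; linarith
  · simp
  · simpa using hσ
  · simp
  · simp
  · simp
  · simp
  · simp only [Finset.card_empty, Finset.card_singleton]; omega

end Assembly
section Asymptotics

lemma bad_lower (k j n : ℕ) (hjk : j < k) (hn : 2 * k + 2 ≤ n) (F : Finset (Finset (Fin n)))
    (hF : n * F.card ≤ (j + 2) * (oddSets j F).card) :
    (1 / (((j : ℝ) + 2) * ((k + 1).choose (j + 2)) * 2 ^ (k - j - 1) * (k - j - 1).factorial))
      * F.card * (n : ℝ) ^ (k - j) ≤ ((badSets k j F).card : ℝ) := by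
  have h1 := badSets_card k j hjk F
  rw [Fintype.card_fin] at h1
  set m := k - j - 1 with hm
  have hkj : k - j = m + 1 := by omega
  have h2 := Nat.pow_le_choose (α := ℝ) m (n - (j + 2))
  have h3 : (n : ℝ) / 2 ≤ ((n - (j + 2) + 1 - m : ℕ) : ℝ) := by
    rw [div_le_iff₀ (by norm_num)]
    have : n ≤ (n - (j + 2) + 1 - m) * 2 := by omega
    exact_mod_cast this
  have h4 : (n : ℝ) ^ m / 2 ^ m / (m.factorial : ℝ) ≤ ((n - (j + 2)).choose m : ℝ) := by
    refine le_trans ?_ h2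
    rw [← div_pow]
    gcongr
  have hF' : (n : ℝ) * F.card ≤ ((j : ℝ) + 2) * (oddSets j F).card := by exact_mod_cast hF
  have h1' : ((oddSets j F).card : ℝ) * ((n - (j + 2)).choose m : ℝ)
      ≤ (badSets k j F).card * ((k + 1).choose (j + 2) : ℝ) := by exact_mod_cast h1
  have hch : (0 : ℝ) < ((k + 1).choose (j + 2) : ℝ) := by
    exact_mod_cast Nat.choose_pos (by omega)
  have hfac : (0 : ℝ) < (m.factorial : ℝ) := by exact_mod_cast Nat.factorial_pos m
  have hj2 : (0 : ℝ) < (j : ℝ) + 2 := by positivity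
  have h5 : ((n : ℝ) * F.card) * ((n : ℝ) ^ m / 2 ^ m / (m.factorial : ℝ))
      ≤ ((j : ℝ) + 2) * ((badSets k j F).card * ((k + 1).choose (j + 2) : ℝ)) := by
    calc ((n : ℝ) * F.card) * ((n : ℝ) ^ m / 2 ^ m / (m.factorial : ℝ))
        ≤ (((j : ℝ) + 2) * (oddSets j F).card) * ((n - (j + 2)).choose m : ℝ) := by
          exact mul_le_mul hF' h4 (by positivity) (mul_nonneg hj2.le (Nat.cast_nonneg _))
      _ = ((j : ℝ) + 2) * ((oddSets j F).card * ((n - (j + 2)).choose m : ℝ)) := by ring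
      _ ≤ _ := by gcongr
  rw [hkj]
  have h6 : (1 / (((j : ℝ) + 2) * ((k + 1).choose (j + 2)) * 2 ^ m * m.factorial))
      * F.card * (n : ℝ) ^ (m + 1) = (((n : ℝ) * F.card) * ((n : ℝ) ^ m / 2 ^ m / (m.factorial : ℝ)))
        / (((j : ℝ) + 2) * ((k + 1).choose (j + 2) : ℝ)) := by
    rw [pow_succ]
    generalize ((k + 1).choose (j + 2) : ℝ) = X at hch ⊢
    generalize (m.factorial : ℝ) = Y at hfac ⊢
    generalize (F.card : ℝ) = W
    field_simp
  rw [h6, div_le_iff₀ (by positivity)]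
  linarith

lemma real_bound (b c C x : ℝ) (hb : 0 ≤ b) (hc : 0 < c) (hx : 0 ≤ x) (hC1 : 1 ≤ C)
    (hC2 : 8 * b ≤ C * c) (hz : C ^ 2 * Real.exp (-(c * x / 4)) ≤ 1) (r s : ℕ) :
    (1 + b * ((r + 2) * x)) ^ (2 * s) * Real.exp (-((r + 1) * x * (c * s)))
      ≤ Real.exp (-(c * x / 4)) ^ ((r + 1) * s) := by
  set y : ℝ := (r + 1) * x with hy
  have hr : (0 : ℝ) ≤ r := Nat.cast_nonneg r
  have hxy : x ≤ y := by rw [hy]; nlinarith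
  have hy0 : 0 ≤ y := hx.trans hxy
  set E := Real.exp (-(c * y / 4)) with hE
  have hE0 : 0 < E := Real.exp_pos _
  have h1 : 1 + b * ((r + 2) * x) ≤ C * Real.exp (c * y / 4) := by
    have e1 := Real.add_one_le_exp (c * y / 4)
    have e2 : (r + 2) * x ≤ 2 * y := by rw [hy]; nlinarith
    have e3 : b * ((r + 2) * x) ≤ b * (2 * y) := by gcongr
    have e4 : C * (c * y / 4 + 1) ≤ C * Real.exp (c * y / 4) := by gcongr
    nlinarith
  have hz2 : Real.exp (-(c * x / 4)) ^ ((r + 1) * s) = E ^ s := by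
    rw [pow_mul, ← Real.exp_nat_mul, hE, hy]
    congr 2
    push_cast
    ring
  have h2 : Real.exp (-(y * (c * s))) = (E ^ 4) ^ s := by
    rw [hE, ← Real.exp_nat_mul, ← Real.exp_nat_mul]
    congr 1
    push_cast
    ring
  rw [hz2, h2, pow_mul, ← mul_pow]
  apply pow_le_pow_left₀ (by positivity)
  have hEE : Real.exp (c * y / 4) * E = 1 := by
    rw [hE, ← Real.exp_add]; simp
  have hEz : E ≤ Real.exp (-(c * x / 4)) := by
    rw [hE]
    apply Real.exp_le_exp.2
    have : c * x ≤ c * y := by gcongr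
    linarith
  have h0 : 0 ≤ 1 + b * ((r + 2) * x) := by positivity
  calc (1 + b * ((r + 2) * x)) ^ 2 * E ^ 4
      ≤ (C * Real.exp (c * y / 4)) ^ 2 * E ^ 4 := by gcongr
    _ = (C ^ 2 * E) * E * (Real.exp (c * y / 4) * E) ^ 2 := by ring
    _ = (C ^ 2 * E) * E := by rw [hEE]; ring
    _ ≤ 1 * E := by
        gcongr
        refine le_trans ?_ hz
        gcongr
    _ = E := one_mul _

lemma Ev_bound (k j n d : ℕ) (c C p0 : ℝ) (hc : 0 < c) (hp0 : 0 ≤ p0)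
    (hC1 : 1 ≤ C) (hC2 : 8 * 2 ^ ((k + 1).choose (j + 1)) ≤ C * c)
    (hz : C ^ 2 * Real.exp (-(c * (p0 * (n : ℝ) ^ (k - j)) / 4)) ≤ 1) (r s : ℕ)
    (σ : Finset (Fin n)) :
    birthMeasure n (Ev k j (Base n k j ((r + 2) * p0) ((r + 1) * p0)
        (c * (s + d : ℕ) * (n : ℝ) ^ (k - j))) (2 * (s + d)) (∅, {σ}, ∅))
      ≤ ENNReal.ofReal (Real.exp (-(c * (p0 * (n : ℝ) ^ (k - j)) / 4))) ^ ((r + 1) * (s + d)) := by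
  have hr : (0 : ℝ) ≤ r := Nat.cast_nonneg r
  have h := measure_Ev_le (V := Fin n) (birthMeasure n) k j
    (Base n k j ((r + 2) * p0) ((r + 1) * p0) (c * (s + d : ℕ) * (n : ℝ) ^ (k - j)))
    (ENNReal.ofReal ((r + 2) * p0))
    (ENNReal.ofReal (Real.exp (-(((r + 1) * p0) * (c * (s + d : ℕ) * (n : ℝ) ^ (k - j))))))
    (ENNReal.ofReal ((n : ℝ) ^ (k - j)))
    (by
      rw [Fintype.card_fin, ← ENNReal.ofReal_natCast]
      apply ENNReal.ofReal_le_ofReal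
      exact_mod_cast Nat.choose_le_pow n (k - j))
    (fun x => measure_Base_le n k j _ _ _ (by positivity) x) (2 * (s + d)) (∅, {σ}, ∅)
  refine h.trans ?_
  simp only [Finset.card_empty, pow_zero, one_mul]
  have e1 : (1 + ENNReal.ofReal ((n : ℝ) ^ (k - j)) * 2 ^ ((k + 1).choose (j + 1))
      * ENNReal.ofReal ((r + 2) * p0))
      = ENNReal.ofReal (1 + 2 ^ ((k + 1).choose (j + 1)) * ((r + 2) * (p0 * (n : ℝ) ^ (k - j)))) := by
    rw [ENNReal.ofReal_add (by norm_num) (by positivity), ENNReal.ofReal_one,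
      show (2 : ENNReal) = ENNReal.ofReal 2 by simp, ← ENNReal.ofReal_pow (by norm_num),
      ← ENNReal.ofReal_mul (by positivity), ← ENNReal.ofReal_mul (by positivity)]
    congr 2
    ring
  rw [e1, ← ENNReal.ofReal_pow (by positivity), ← ENNReal.ofReal_mul (by positivity),
    ← ENNReal.ofReal_pow (by positivity)]
  apply ENNReal.ofReal_le_ofReal
  have := real_bound (2 ^ ((k + 1).choose (j + 1))) c C (p0 * (n : ℝ) ^ (k - j)) (by positivity) hc
    (by positivity) hC1 hC2 hz r (s + d)
  refine le_trans (le_of_eq ?_) this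
  congr 2
  push_cast
  ring

lemma total_bound (k j n d : ℕ) (hj : 1 ≤ j) (hjk : j < k) (hd : 1 ≤ d) (c C p0 : ℝ) (hc : 0 < c)
    (hp0 : 0 < p0) (hC1 : 2 ≤ C) (hC2 : 8 * 2 ^ ((k + 1).choose (j + 1)) ≤ C * c)
    (hz : C ^ 2 * Real.exp (-(c * (p0 * (n : ℝ) ^ (k - j)) / 4)) ≤ 1)
    (hbad : ∀ F : Finset (Finset (Fin n)), n * F.card ≤ (j + 2) * (oddSets j F).card →
      c * F.card * (n : ℝ) ^ (k - j) ≤ ((badSets k j F).card : ℝ)) :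
    birthMeasure n {t : Finset (Fin n) → ℝ |
        ∀ p : ℝ, p0 ≤ p →
          ((∀ f : Cochain (complexAt k n t p) j, ¬ InNG (complexAt k n t p) k j f) ∨
            (∃ f : Cochain (complexAt k n t p) j, InNG (complexAt k n t p) k j f ∧
              ((cochainSupport f).ncard : ℝ) < (d : ℝ)))}ᶜ
      ≤ (n : ENNReal) ^ (j + 1) *
        (ENNReal.ofReal (Real.exp (-(c * (p0 * (n : ℝ) ^ (k - j)) / 4))) ^ d * 4) := by
  set z := Real.exp (-(c * (p0 * (n : ℝ) ^ (k - j)) / 4)) with hzdef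
  set Z := ENNReal.ofReal z with hZ
  have hsub : {t : Finset (Fin n) → ℝ |
        ∀ p : ℝ, p0 ≤ p →
          ((∀ f : Cochain (complexAt k n t p) j, ¬ InNG (complexAt k n t p) k j f) ∨
            (∃ f : Cochain (complexAt k n t p) j, InNG (complexAt k n t p) k j f ∧
              ((cochainSupport f).ncard : ℝ) < (d : ℝ)))}ᶜ
      ⊆ ⋃ r : ℕ, ⋃ s : ℕ, ⋃ σ ∈ Finset.powersetCard (j + 1) (Finset.univ : Finset (Fin n)),
        Ev k j (Base n k j ((r + 2) * p0) ((r + 1) * p0) (c * (s + d : ℕ) * (n : ℝ) ^ (k - j)))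
        (2 * (s + d)) (∅, {σ}, ∅) := by
    intro t ht
    have ht' : ¬ ∀ p : ℝ, p0 ≤ p →
          ((∀ f : Cochain (complexAt k n t p) j, ¬ InNG (complexAt k n t p) k j f) ∨
            (∃ f : Cochain (complexAt k n t p) j, InNG (complexAt k n t p) k j f ∧
              ((cochainSupport f).ncard : ℝ) < (d : ℝ))) := ht
    rw [not_forall] at ht'
    obtain ⟨p, hp'⟩ := ht'
    rw [Classical.not_imp] at hp'
    obtain ⟨r, s, σ, hσ, hmem⟩ := bad_subset k j n d hj hjk hd c p0 hp0 hbad t p hp'.1 hp'.2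
    exact Set.mem_iUnion.2 ⟨r, Set.mem_iUnion.2 ⟨s, Set.mem_biUnion hσ hmem⟩⟩
  have hz12 : z ≤ 1 / 2 := by
    have h0 : 0 < z := Real.exp_pos _
    nlinarith
  have hZ12 : Z ≤ 2⁻¹ := by
    rw [hZ, show (2 : ENNReal)⁻¹ = ENNReal.ofReal (1 / 2) by
      rw [one_div, ENNReal.ofReal_inv_of_pos (by norm_num)]; simp]
    exact ENNReal.ofReal_le_ofReal hz12
  have hZ1 : Z ≤ 1 := hZ12.trans (by simp)
  have hgeom : (1 - Z)⁻¹ ≤ 2 := by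
    rw [ENNReal.inv_le_iff_inv_le]
    rw [← ENNReal.one_sub_inv_two]
    exact tsub_le_tsub_left hZ12 1
  refine (measure_mono hsub).trans ?_
  refine (measure_iUnion_le _).trans ?_
  calc _ ≤ ∑' r : ℕ, ∑' s : ℕ, (n : ENNReal) ^ (j + 1) * (Z ^ d * (Z ^ r * Z ^ s)) := by
        refine ENNReal.tsum_le_tsum fun r => ?_
        refine (measure_iUnion_le _).trans ?_
        refine ENNReal.tsum_le_tsum fun s => ?_
        refine (measure_biUnion_finset_le _ _).trans ?_
        refine (Finset.sum_le_card_nsmul _ _ (Z ^ d * (Z ^ r * Z ^ s)) ?_).trans ?_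
        · intro σ _
          refine (Ev_bound k j n d c C p0 hc hp0.le (by linarith) hC2 hz r s σ).trans ?_
          rw [← pow_add, ← pow_add]
          refine pow_le_pow_right_of_le_one' hZ1 ?_
          nlinarith [Nat.zero_le (r * s), Nat.mul_le_mul_left r hd]
        · rw [nsmul_eq_mul]
          refine mul_le_mul_left ?_ _
          rw [Finset.card_powersetCard, Finset.card_univ, Fintype.card_fin]
          exact_mod_cast Nat.choose_le_pow n (j + 1)
    _ = (n : ENNReal) ^ (j + 1) * (Z ^ d * ((1 - Z)⁻¹ * (1 - Z)⁻¹)) := by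
        simp_rw [ENNReal.tsum_mul_left, ENNReal.tsum_mul_right, ENNReal.tsum_geometric]
    _ ≤ _ := by
        gcongr
        calc (1 - Z)⁻¹ * (1 - Z)⁻¹ ≤ 2 * 2 := by gcongr
          _ = 4 := by norm_num

lemma pjMinus_lower (k j n : ℕ) (hn : 0 < n) (hlog : 4 ≤ Real.log n) :
    ((j + 1 : ℝ) * (k - j).factorial / (2 * ((k - j + 1 : ℕ) : ℝ))) * Real.log n
      ≤ pjMinus k j n * (n : ℝ) ^ (k - j) := by
  have hsq : 2 ≤ Real.sqrt (Real.log n) := by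
    rw [Real.le_sqrt (by norm_num) (by linarith)]; linarith
  have h1 : 1 / 2 ≤ 1 - 1 / Real.sqrt (Real.log n) := by
    have : 1 / Real.sqrt (Real.log n) ≤ 1 / 2 := one_div_le_one_div_of_le (by norm_num) hsq
    linarith
  have hn' : (0 : ℝ) < (n : ℝ) ^ (k - j) := by positivity
  have hk : (0 : ℝ) < ((k - j + 1 : ℕ) : ℝ) := by positivity
  have e : pjMinus k j n * (n : ℝ) ^ (k - j) = (1 - 1 / Real.sqrt (Real.log n)) *
      (((j + 1 : ℝ) * Real.log n) * (k - j).factorial / ((k - j + 1 : ℕ) : ℝ)) := by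
    rw [pjMinus]
    field_simp
  rw [e]
  calc _ = 1 / 2 * (((j + 1 : ℝ) * Real.log n) * (k - j).factorial / ((k - j + 1 : ℕ) : ℝ)) := by
        field_simp
    _ ≤ _ := by
        gcongr

end Asymptotics

/-- Lemma 5.5: there is a constant `d̄ > 0` such that whp, for all `p ≥ p_j^-`
simultaneously, either `N_{G_p}` is empty or the minimum support size of an element of
`N_{G_p}` is less than `d̄`. -/
theorem statement18 (k j : ℕ) (hk : 2 ≤ k) (hj : 1 ≤ j) (hjk : j < k) :
    ∃ d : ℝ, 0 < d ∧
      Tendsto (fun n : ℕ => birthMeasure n {t : Finset (Fin n) → ℝ |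
        ∀ p : ℝ, pjMinus k j n ≤ p →
          ((∀ f : Cochain (complexAt k n t p) j, ¬ InNG (complexAt k n t p) k j f) ∨
            (∃ f : Cochain (complexAt k n t p) j, InNG (complexAt k n t p) k j f ∧
              ((cochainSupport f).ncard : ℝ) < d))})
        atTop (nhds 1) := by
  set c : ℝ := 1 / (((j : ℝ) + 2) * ((k + 1).choose (j + 2)) * 2 ^ (k - j - 1) *
    (k - j - 1).factorial) with hcdef
  have hc : 0 < c := by
    have hch : (0 : ℝ) < ((k + 1).choose (j + 2) : ℝ) := by
      exact_mod_cast Nat.choose_pos (by omega)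
    rw [hcdef]
    positivity
  set a : ℝ := (j + 1 : ℝ) * (k - j).factorial / (2 * ((k - j + 1 : ℕ) : ℝ)) with hadef
  have ha : 0 < a := by rw [hadef]; positivity
  set C : ℝ := max 2 (8 * 2 ^ ((k + 1).choose (j + 1)) / c) with hCdef
  have hC1 : 2 ≤ C := le_max_left _ _
  have hC2 : 8 * 2 ^ ((k + 1).choose (j + 1)) ≤ C * c := by
    rw [← div_le_iff₀ hc]; exact le_max_right _ _
  obtain ⟨d0, hd0⟩ := exists_nat_ge (((j : ℝ) + 2) / (c * a / 4))
  set d := d0 + 1 with hd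
  have hdd : (j : ℝ) + 2 ≤ c * a / 4 * d := by
    rw [div_le_iff₀ (by positivity)] at hd0
    rw [hd]; push_cast
    have : 0 < c * a / 4 := by positivity
    linarith
  refine ⟨(d : ℝ), by positivity, ?_⟩
  have hlogT : Tendsto (fun n : ℕ => Real.log n) atTop atTop :=
    Real.tendsto_log_atTop.comp tendsto_natCast_atTop_atTop
  have hev : ∀ᶠ n : ℕ in atTop, birthMeasure n {t : Finset (Fin n) → ℝ |
        ∀ p : ℝ, pjMinus k j n ≤ p →
          ((∀ f : Cochain (complexAt k n t p) j, ¬ InNG (complexAt k n t p) k j f) ∨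
            (∃ f : Cochain (complexAt k n t p) j, InNG (complexAt k n t p) k j f ∧
              ((cochainSupport f).ncard : ℝ) < (d : ℝ)))}ᶜ ≤ ENNReal.ofReal (4 / n) := by
    filter_upwards [eventually_ge_atTop (2 * k + 2), hlogT.eventually_ge_atTop 4,
      hlogT.eventually_ge_atTop (Real.log (C ^ 2) / (c * a / 4))] with n hn hl4 hlC
    have hn0 : 0 < n := by omega
    have hnR : (0 : ℝ) < n := by exact_mod_cast hn0
    have hlow := pjMinus_lower k j n hn0 hl4
    rw [← hadef] at hlow
    set p0 := pjMinus k j n with hp0def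
    have hp0 : 0 < p0 := by
      have h1 : 0 < p0 * (n : ℝ) ^ (k - j) := lt_of_lt_of_le (by positivity) hlow
      exact pos_of_mul_pos_left h1 (by positivity)
    have hexp : c * a / 4 * Real.log n ≤ c * (p0 * (n : ℝ) ^ (k - j)) / 4 := by
      have := mul_le_mul_of_nonneg_left hlow hc.le
      linarith
    have hz : C ^ 2 * Real.exp (-(c * (p0 * (n : ℝ) ^ (k - j)) / 4)) ≤ 1 := by
      rw [div_le_iff₀ (by positivity)] at hlC
      rw [Real.exp_neg, ← div_eq_mul_inv, div_le_one (Real.exp_pos _),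
        ← Real.log_le_iff_le_exp (by positivity)]
      linarith
    refine (total_bound k j n d hj hjk (by omega) c C p0 hc hp0 hC1 hC2 hz
      (fun F hF => bad_lower k j n hjk hn F hF)).trans ?_
    rw [← ENNReal.ofReal_natCast, show (4 : ENNReal) = ENNReal.ofReal 4 by simp,
      ← ENNReal.ofReal_pow hnR.le, ← ENNReal.ofReal_pow (Real.exp_pos _).le,
      ← ENNReal.ofReal_mul (by positivity), ← ENNReal.ofReal_mul (by positivity)]
    apply ENNReal.ofReal_le_ofReal
    have hzd : Real.exp (-(c * (p0 * (n : ℝ) ^ (k - j)) / 4)) ^ d ≤ 1 / (n : ℝ) ^ (j + 2) := by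
      rw [← Real.exp_nat_mul]
      have e1 : 1 / (n : ℝ) ^ (j + 2) = Real.exp (-(((j : ℝ) + 2) * Real.log n)) := by
        rw [Real.exp_neg, one_div]
        congr 1
        rw [show ((j : ℝ) + 2) = ((j + 2 : ℕ) : ℝ) by push_cast; ring, Real.exp_nat_mul,
          Real.exp_log hnR]
      rw [e1]
      apply Real.exp_le_exp.2
      have h1 : ((j : ℝ) + 2) * Real.log n ≤ c * a / 4 * d * Real.log n := by gcongr
      have h2 := mul_le_mul_of_nonneg_left hexp (Nat.cast_nonneg (α := ℝ) d)
      linarith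
    calc (n : ℝ) ^ (j + 1) * (Real.exp (-(c * (p0 * (n : ℝ) ^ (k - j)) / 4)) ^ d * 4)
        ≤ (n : ℝ) ^ (j + 1) * (1 / (n : ℝ) ^ (j + 2) * 4) := by gcongr
      _ = 4 / n := by
        field_simp
        ring
  have hprob : ∀ n : ℕ, IsProbabilityMeasure (birthMeasure n) := by
    intro n
    refine ⟨?_⟩
    rw [birthMeasure, Measure.pi_univ]
    simp
  have hlim : Tendsto (fun n : ℕ => 1 - ENNReal.ofReal (4 / (n : ℝ))) atTop (nhds 1) := by
    have h1 : Tendsto (fun n : ℕ => ENNReal.ofReal (4 / (n : ℝ))) atTop (nhds 0) := by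
      have := ENNReal.tendsto_ofReal (tendsto_const_div_atTop_nhds_zero_nat (4 : ℝ))
      simpa using this
    have := ENNReal.Tendsto.sub (tendsto_const_nhds (x := (1 : ENNReal))) h1 (Or.inl (by simp))
    simpa using this
  refine tendsto_of_tendsto_of_tendsto_of_le_of_le' hlim tendsto_const_nhds ?_ ?_
  · filter_upwards [hev] with n hn
    have := hprob n
    rw [tsub_le_iff_right]
    calc (1 : ENNReal) = birthMeasure n Set.univ := measure_univ.symm
      _ ≤ _ := by
        rw [← Set.union_compl_self {t : Finset (Fin n) → ℝ |
        ∀ p : ℝ, pjMinus k j n ≤ p →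
          ((∀ f : Cochain (complexAt k n t p) j, ¬ InNG (complexAt k n t p) k j f) ∨
            (∃ f : Cochain (complexAt k n t p) j, InNG (complexAt k n t p) k j f ∧
              ((cochainSupport f).ncard : ℝ) < (d : ℝ)))}]
        exact (measure_union_le _ _).trans (add_le_add le_rfl hn)
  · filter_upwards with n
    have := hprob n
    exact prob_le_one

end RSC
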